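/- For compact operators A, B on a Hilbert space and 0 < p ≤ 1, the modified triangle inequality ‖A + B‖_p^p ≤ ‖A‖_p^p + ‖B‖_p^p holds, where ‖·‖_p denotes the Schatten p-quasinorm (the ℓ^p norm of the singular value sequence). -/

import Mathlib

open scoped ENNReal

/-- The `n`-th approximation number of a bounded operator `A`: the distance of `A`
to operators of rank at most `n`.  For compact operators on a Hilbert space this
coincides with the `n`-th singular value `s_n(A)` (0-indexed). -/
noncomputable def approxNum {H : Type*} [NormedAddCommGroup H] [InnerProductSpace ℂ H]
    [CompleteSpace H] (A : H →L[ℂ] H) (n : ℕ) : ℝ :=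
  sInf {r : ℝ | ∃ F : H →L[ℂ] H,
    Module.rank ℂ (LinearMap.range (F : H →ₗ[ℂ] H)) ≤ (n : Cardinal) ∧ r = ‖A - F‖}

/-!
Deflation, `R (n + 1) = R n - ‖R n‖ f n ⊗ e n` with `(e n, f n)` a top pair of singular vectors
of `R n`, produces the singular value decomposition of a compact operator, with `s n = ‖R n‖`. The
trace norm dominates `∑ i, |⟪v i, A (u i)⟫|` for all orthonormal systems `u`, `v`, with equality for
the singular vectors of `A`, which gives the triangle inequality for `p = 1`. Applied to what is
left of `A` and `B` after subtracting the leading `k` and `l` terms of their decompositions, it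
reads `∑ s_{n+k+l}(A + B) ≤ ∑ s_{n+k}(A) + ∑ s_{n+l}(B)`.

For a decreasing sequence, `∑ min(s_n, t)` is the minimum over `k` of `k t + ∑ s_{n+k}`; hence
`∑ min(s_n(A), t)` is subadditive in `A` for every `t > 0`. As
`x ^ p = p (1 - p) ∫ min(x, t) t ^ (p - 2) dt` over `t > 0` when `0 < p < 1`, integrating in `t`
gives subadditivity of `∑ s_n(A) ^ p`.
-/

open ContinuousLinearMap Filter InnerProductSpace MeasureTheory Set
open scoped Topology

section PaddedOrthonormal

variable {ι 𝕜 E F : Type*} [RCLike 𝕜] [NormedAddCommGroup E] [InnerProductSpace 𝕜 E]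
  [NormedAddCommGroup F] [InnerProductSpace 𝕜 F]

variable (𝕜) in
/-- A family whose nonzero members form an orthonormal family. The zero members pad a possibly
finite orthonormal system, such as the singular vectors of an operator, to a family indexed by all
of `ι`. -/
def IsPaddedOrthonormal (v : ι → E) : Prop :=
  Orthonormal 𝕜 fun i : {i // v i ≠ 0} => v i

namespace IsPaddedOrthonormal

lemma orthonormal_comp {κ : Type*} {v : ι → E} (hv : IsPaddedOrthonormal 𝕜 v) {g : κ → ι}
    (hg : Function.Injective g) (hvg : ∀ k, v (g k) ≠ 0) : Orthonormal 𝕜 fun k => v (g k) :=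
  hv.comp (fun k => ⟨g k, hvg k⟩) fun _ _ hkl => hg (congrArg Subtype.val hkl)

lemma enorm_le_one {v : ι → E} (hv : IsPaddedOrthonormal 𝕜 v) (i : ι) : ‖v i‖ₑ ≤ 1 := by
  by_cases hi : v i = 0
  · simp [hi]
  · simp [← ofReal_norm, hv.1 ⟨i, hi⟩]

lemma sum_norm_inner_sq_le {v : ι → E} (hv : IsPaddedOrthonormal 𝕜 v) (s : Finset ι) (x : E) :
    ∑ i ∈ s, ‖inner 𝕜 (v i) x‖ ^ 2 ≤ ‖x‖ ^ 2 := by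
  classical
  calc ∑ i ∈ s, ‖inner 𝕜 (v i) x‖ ^ 2
      = ∑ i ∈ s.subtype (v · ≠ 0), ‖inner 𝕜 (v i) x‖ ^ 2 := by
        rw [Finset.sum_subtype_eq_sum_filter (f := fun i => ‖inner 𝕜 (v i) x‖ ^ 2)]
        refine (Finset.sum_filter_of_ne (p := (v · ≠ 0)) fun i _ hi hvi => hi ?_).symm
        simp only [hvi, inner_zero_left, norm_zero, zero_pow two_ne_zero]
    _ ≤ ‖x‖ ^ 2 := Orthonormal.sum_inner_products_le x hv

lemma tsum_enorm_inner_mul_enorm_inner_le {u : ι → E} {v : ι → F}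
    (hu : IsPaddedOrthonormal 𝕜 u) (hv : IsPaddedOrthonormal 𝕜 v) (x : E) (y : F) :
    ∑' i, ‖inner 𝕜 (u i) x‖ₑ * ‖inner 𝕜 (v i) y‖ₑ ≤ ‖x‖ₑ * ‖y‖ₑ := by
  refine ENNReal.summable.tsum_le_of_sum_le fun s => ?_
  have cauchy_schwarz : ∑ i ∈ s, ‖inner 𝕜 (u i) x‖ * ‖inner 𝕜 (v i) y‖ ≤ ‖x‖ * ‖y‖ := by
    refine abs_le_of_sq_le_sq' ?_ (by positivity) |>.2
    calc (∑ i ∈ s, ‖inner 𝕜 (u i) x‖ * ‖inner 𝕜 (v i) y‖) ^ 2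
        ≤ (∑ i ∈ s, ‖inner 𝕜 (u i) x‖ ^ 2) * ∑ i ∈ s, ‖inner 𝕜 (v i) y‖ ^ 2 :=
          Finset.sum_mul_sq_le_sq_mul_sq _ _ _
      _ ≤ ‖x‖ ^ 2 * ‖y‖ ^ 2 := by
          gcongr
          exacts [hu.sum_norm_inner_sq_le s x, hv.sum_norm_inner_sq_le s y]
      _ = (‖x‖ * ‖y‖) ^ 2 := (mul_pow _ _ _).symm
  simpa only [← ofReal_norm, ← ENNReal.ofReal_mul (norm_nonneg _),
    ← ENNReal.ofReal_sum_of_nonneg fun i _ => mul_nonneg (norm_nonneg (inner 𝕜 (u i) x))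
      (norm_nonneg (inner 𝕜 (v i) y))] using ENNReal.ofReal_le_ofReal cauchy_schwarz

end IsPaddedOrthonormal

lemma mul_norm_le_norm_apply_of_mem_span [Finite ι] {T : E →L[𝕜] F} {e : ι → E} {f : ι → F}
    {σ : ι → 𝕜} {c : ℝ} (he : Orthonormal 𝕜 e) (hf : Orthonormal 𝕜 f)
    (hT : ∀ i, T (e i) = σ i • f i) (hc : 0 ≤ c) (hσ : ∀ i, c ≤ ‖σ i‖) {x : E}
    (hx : x ∈ Submodule.span 𝕜 (range e)) :
    c * ‖x‖ ≤ ‖T x‖ := by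
  have := Fintype.ofFinite ι
  obtain ⟨a, rfl⟩ := Submodule.mem_span_range_iff_exists_fun 𝕜 |>.1 hx
  have norm_x : ‖∑ i, a i • e i‖ ^ 2 = ∑ i, ‖a i‖ ^ 2 := by
    simpa using he.orthogonalFamily.norm_sum a Finset.univ
  have norm_Tx : ‖T (∑ i, a i • e i)‖ ^ 2 = ∑ i, ‖a i * σ i‖ ^ 2 := by
    simpa [hT, smul_smul] using hf.orthogonalFamily.norm_sum (fun i => a i * σ i) Finset.univ
  refine (sq_le_sq₀ (by positivity) (norm_nonneg _)).1 ?_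
  rw [mul_pow, norm_x, norm_Tx, Finset.mul_sum]
  gcongr with i
  rw [norm_mul, mul_pow, mul_comm]
  gcongr
  exact hσ i

end PaddedOrthonormal

section Deflation

variable {𝕜 E F : Type*} [RCLike 𝕜] [NormedAddCommGroup E] [InnerProductSpace 𝕜 E]
  [NormedAddCommGroup F] [InnerProductSpace 𝕜 F]

lemma isCompactOperator_rankOne (x : F) (y : E) : IsCompactOperator (rankOne 𝕜 x y : E → F) :=
  (isCompactOperator_of_locallyCompactSpace_rng (toSpanSingleton 𝕜 x)).comp_clm (innerSL 𝕜 y)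

lemma rank_rankOne_le_one (x : F) (y : E) :
    LinearMap.rank (rankOne 𝕜 x y : E →ₗ[𝕜] F) ≤ 1 :=
  calc LinearMap.rank (rankOne 𝕜 x y : E →ₗ[𝕜] F)
      ≤ LinearMap.rank (LinearMap.toSpanSingleton 𝕜 F x) :=
        LinearMap.rank_comp_le_left (innerSL 𝕜 y : E →ₗ[𝕜] 𝕜) (LinearMap.toSpanSingleton 𝕜 F x)
    _ ≤ 1 := by
        rw [LinearMap.rank, LinearMap.range_toSpanSingleton]
        exact (rank_span_le {x}).trans_eq (Cardinal.mk_singleton x)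

/-- The operator `T` compressed to the orthogonal complement of a unit vector `e`. When
`e` is a right singular vector for the largest singular value `‖T‖`, with left singular vector `f`,
the subtracted term is `‖T‖ f ⊗ e`, so this removes that singular value. -/
noncomputable def deflate (T : E →L[𝕜] F) (e : E) : E →L[𝕜] F := T - rankOne 𝕜 (T e) e

variable [CompleteSpace E] [CompleteSpace F]

/-- A pair of singular vectors of `T` for its largest singular value `‖T‖`. The zero operator is
assigned the pair `(0, 0)`. -/
structure IsTopSingularPair (T : E →L[𝕜] F) (e : E) (f : F) : Prop where
  apply_left : T e = (‖T‖ : 𝕜) • f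
  adjoint_apply_right : adjoint T f = (‖T‖ : 𝕜) • e
  norm_left : T ≠ 0 → ‖e‖ = 1
  norm_right : T ≠ 0 → ‖f‖ = 1
  left_eq_zero : T = 0 → e = 0
  right_eq_zero : T = 0 → f = 0

lemma exists_hasEigenvalue_norm_eq {S : E →L[𝕜] E} (hS : IsCompactOperator S)
    (hSa : IsSelfAdjoint S) (hS0 : S ≠ 0) :
    ∃ μ : 𝕜, Module.End.HasEigenvalue (S : E →ₗ[𝕜] E) μ ∧ ‖μ‖ = ‖S‖ := by
  have radius_eq : spectralRadius 𝕜 S = ‖S‖₊ := S.spectralRadius_eq_nnnorm hSa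
  have spectrum_nonempty : (spectrum 𝕜 S).Nonempty := by
    contrapose! hS0
    simpa [spectralRadius, hS0] using radius_eq.symm
  obtain ⟨μ, μ_mem, radius_eq'⟩ :=
    spectrum.exists_nnnorm_eq_spectralRadius_of_nonempty spectrum_nonempty
  have norm_μ : ‖μ‖₊ = ‖S‖₊ := by exact_mod_cast radius_eq'.trans radius_eq
  have μ_ne_zero : μ ≠ 0 := nnnorm_ne_zero_iff.1 (norm_μ ▸ nnnorm_ne_zero_iff.2 hS0)
  exact ⟨μ, (hS.hasEigenvalue_iff_mem_spectrum μ_ne_zero).2 μ_mem, congrArg NNReal.toReal norm_μ⟩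

lemma exists_norm_eq_one_adjoint_apply_apply_eq {T : E →L[𝕜] F} (hT : IsCompactOperator T)
    (hT0 : T ≠ 0) : ∃ e : E, ‖e‖ = 1 ∧ adjoint T (T e) = (‖T‖ ^ 2 : 𝕜) • e := by
  have adjoint_comp_ne_zero : adjoint T ∘L T ≠ 0 := by rwa [Ne, adjoint_comp_self_eq_zero_iff]
  obtain ⟨μ, hμ, norm_μ⟩ := exists_hasEigenvalue_norm_eq (hT.clm_comp (adjoint T))
    (isPositive_adjoint_comp_self T).isSelfAdjoint adjoint_comp_ne_zero
  rw [norm_adjoint_comp_self] at norm_μ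
  obtain ⟨v, hv⟩ := hμ.exists_hasEigenvector
  have hTv : adjoint T (T v) = μ • v := hv.apply_eq_smul
  have norm_v : (‖v‖ : 𝕜) ≠ 0 := by simpa using hv.2
  have μ_mul : μ * ‖v‖ ^ 2 = (‖T v‖ ^ 2 : ℝ) := by
    simpa [hTv, inner_smul_right, inner_self_eq_norm_sq_to_K] using adjoint_inner_right T v (T v)
  have norm_μ_mul : ‖μ‖ * ‖v‖ ^ 2 = ‖T v‖ ^ 2 := by simpa using congrArg norm μ_mul
  have μ_eq : μ = (‖T‖ ^ 2 : 𝕜) := by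
    refine mul_right_cancel₀ (pow_ne_zero 2 norm_v) ?_
    rw [μ_mul, ← norm_μ_mul, norm_μ]
    push_cast
    ring
  refine ⟨(‖v‖ : 𝕜)⁻¹ • v, norm_smul_inv_norm hv.2, ?_⟩
  rw [map_smul, map_smul, hTv, μ_eq, smul_comm]

lemma exists_isTopSingularPair {T : E →L[𝕜] F} (hT : IsCompactOperator T) :
    ∃ e f, IsTopSingularPair T e f := by
  rcases eq_or_ne T 0 with rfl | hT0
  · exact ⟨0, 0, by constructor <;> simp⟩
  obtain ⟨e, norm_e, he⟩ := exists_norm_eq_one_adjoint_apply_apply_eq hT hT0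
  have norm_T : (‖T‖ : 𝕜) ≠ 0 := by simpa using hT0
  have norm_Te : ‖T e‖ = ‖T‖ := by
    have : (‖T e‖ ^ 2 : 𝕜) = (‖T‖ ^ 2 : 𝕜) := by
      simpa [he, inner_smul_right, inner_self_eq_norm_sq_to_K, norm_e] using
        (adjoint_inner_right T e (T e)).symm
    exact (sq_eq_sq₀ (norm_nonneg _) (norm_nonneg _)).1 (by exact_mod_cast this)
  refine ⟨e, (‖T‖ : 𝕜)⁻¹ • T e, ?_, ?_, fun _ => norm_e, fun _ => ?_, (absurd · hT0),
    (absurd · hT0)⟩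
  · rw [smul_inv_smul₀ norm_T]
  · rw [map_smul, he, sq, mul_smul, inv_smul_smul₀ norm_T]
  · rw [← norm_Te]
    exact norm_smul_inv_norm (norm_ne_zero_iff.1 (norm_Te ▸ norm_ne_zero_iff.2 hT0))

namespace IsTopSingularPair

variable {T : E →L[𝕜] F} {e : E} {f : F}

lemma adjoint (h : IsTopSingularPair T e f) : IsTopSingularPair (adjoint T) f e where
  apply_left := by rw [LinearIsometryEquiv.norm_map, h.adjoint_apply_right]
  adjoint_apply_right := by rw [adjoint_adjoint, LinearIsometryEquiv.norm_map, h.apply_left]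
  norm_left := h.norm_right ∘ by simp
  norm_right := h.norm_left ∘ by simp
  left_eq_zero := h.right_eq_zero ∘ by simp
  right_eq_zero := h.left_eq_zero ∘ by simp

lemma adjoint_deflate (h : IsTopSingularPair T e f) :
    ContinuousLinearMap.adjoint (deflate T e) = deflate (ContinuousLinearMap.adjoint T) f := by
  simp [deflate, h.apply_left, h.adjoint_apply_right, map_smulₛₗ]

lemma inner_left_eq_zero_of_apply_eq_zero (h : IsTopSingularPair T e f) {x : E} (hx : T x = 0) :
    inner 𝕜 e x = 0 := by
  rcases eq_or_ne T 0 with hT | hT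
  · simp [h.left_eq_zero hT]
  · simpa [h.adjoint_apply_right, hx, inner_smul_left, hT] using adjoint_inner_left T x f

lemma left_ne_zero (h : IsTopSingularPair T e f) (hT : T ≠ 0) : e ≠ 0 := by
  simpa using ne_of_eq_of_ne (h.norm_left hT) one_ne_zero

lemma deflate_apply_left (h : IsTopSingularPair T e f) : deflate T e e = 0 := by
  rcases eq_or_ne T 0 with hT | hT
  · simp [deflate, hT]
  · simp [deflate, inner_self_eq_norm_sq_to_K, h.norm_left hT]

lemma deflate_apply_eq_zero_of_apply_eq_zero (h : IsTopSingularPair T e f) {x : E} (hx : T x = 0) :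
    deflate T e x = 0 := by
  simp [deflate, hx, h.inner_left_eq_zero_of_apply_eq_zero hx]

lemma norm_deflate_le (h : IsTopSingularPair T e f) : ‖deflate T e‖ ≤ ‖T‖ := by
  rcases eq_or_ne T 0 with hT | hT
  · simp [deflate, hT]
  have norm_id_sub_le : ‖ContinuousLinearMap.id 𝕜 E - rankOne 𝕜 e e‖ ≤ 1 :=
    (isStarProjection_rankOne_self (h.norm_left hT)).one_sub.norm_le
  calc ‖deflate T e‖ = ‖T ∘L (ContinuousLinearMap.id 𝕜 E - rankOne 𝕜 e e)‖ := by
        rw [comp_sub, comp_rankOne, comp_id, deflate]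
    _ ≤ ‖T‖ * 1 := (opNorm_comp_le _ _).trans (by gcongr)
    _ = ‖T‖ := mul_one _

end IsTopSingularPair

/-- A sequence of operators in which each is obtained from its predecessor by removing the largest
singular value. It computes the singular value decomposition of `R 0`: the singular values
are `‖R n‖`, with singular vectors `e n` and `f n`. -/
structure IsDeflationSeq (R : ℕ → E →L[𝕜] F) (e : ℕ → E) (f : ℕ → F) : Prop where
  isTopSingularPair (n : ℕ) : IsTopSingularPair (R n) (e n) (f n)
  succ (n : ℕ) : R (n + 1) = deflate (R n) (e n)

lemma exists_isDeflationSeq {A : E →L[𝕜] F} (hA : IsCompactOperator A) :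
    ∃ R e f, IsDeflationSeq R e f ∧ R 0 = A ∧ ∀ n, IsCompactOperator (R n) := by
  choose e f hef using fun T : {T : E →L[𝕜] F // IsCompactOperator T} =>
    exists_isTopSingularPair T.2
  let R : ℕ → {T : E →L[𝕜] F // IsCompactOperator T} := fun n =>
    (fun T => ⟨deflate T (e T), T.2.sub (isCompactOperator_rankOne _ _)⟩)^[n] ⟨A, hA⟩
  refine ⟨fun n => R n, fun n => e (R n), fun n => f (R n), ⟨fun n => hef (R n), fun n => ?_⟩, rfl,
    fun n => (R n).2⟩
  simp only [R, Function.iterate_succ_apply']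

namespace IsDeflationSeq

variable {R : ℕ → E →L[𝕜] F} {e : ℕ → E} {f : ℕ → F}

lemma adjoint (h : IsDeflationSeq R e f) : IsDeflationSeq (fun n => adjoint (R n)) f e where
  isTopSingularPair n := (h.isTopSingularPair n).adjoint
  succ n := by rw [h.succ, (h.isTopSingularPair n).adjoint_deflate]

lemma add_right (h : IsDeflationSeq R e f) (k : ℕ) :
    IsDeflationSeq (fun n => R (n + k)) (fun n => e (n + k)) (fun n => f (n + k)) where
  isTopSingularPair n := h.isTopSingularPair (n + k)
  succ n := by rw [add_right_comm, h.succ]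

lemma antitone_norm (h : IsDeflationSeq R e f) : Antitone fun n => ‖R n‖ :=
  antitone_nat_of_succ_le fun n => by
    rw [h.succ]
    exact (h.isTopSingularPair n).norm_deflate_le

lemma apply_left_eq_zero_of_lt (h : IsDeflationSeq R e f) {j n : ℕ} (hjn : j < n) :
    R n (e j) = 0 := by
  induction n, hjn using Nat.le_induction with
  | base => rw [h.succ, (h.isTopSingularPair j).deflate_apply_left]
  | succ n _ ih =>
    rw [h.succ, (h.isTopSingularPair n).deflate_apply_eq_zero_of_apply_eq_zero ih]

lemma inner_left_eq_zero_of_lt (h : IsDeflationSeq R e f) {j n : ℕ} (hjn : j < n) :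
    inner 𝕜 (e n) (e j) = 0 :=
  (h.isTopSingularPair n).inner_left_eq_zero_of_apply_eq_zero (h.apply_left_eq_zero_of_lt hjn)

lemma isPaddedOrthonormal_left (h : IsDeflationSeq R e f) : IsPaddedOrthonormal 𝕜 e := by
  refine ⟨fun i => (h.isTopSingularPair i).norm_left (mt (h.isTopSingularPair i).left_eq_zero i.2),
    fun i j hij => ?_⟩
  rcases lt_or_gt_of_ne (Subtype.coe_ne_coe.2 hij) with hlt | hgt
  · exact inner_eq_zero_symm.1 (h.inner_left_eq_zero_of_lt hlt)
  · exact h.inner_left_eq_zero_of_lt hgt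

lemma isPaddedOrthonormal_right (h : IsDeflationSeq R e f) : IsPaddedOrthonormal 𝕜 f :=
  h.adjoint.isPaddedOrthonormal_left

lemma zero_sub_eq_sum (h : IsDeflationSeq R e f) (n : ℕ) :
    R 0 - R n = ∑ j ∈ Finset.range n, (‖R j‖ : 𝕜) • rankOne 𝕜 (f j) (e j) := by
  induction n with
  | zero => simp
  | succ n ih =>
    rw [Finset.sum_range_succ, ← ih, h.succ, deflate, (h.isTopSingularPair n).apply_left]
    simp only [map_smul, smul_apply]
    abel

lemma zero_apply_left (h : IsDeflationSeq R e f) (n : ℕ) : R 0 (e n) = (‖R n‖ : 𝕜) • f n := by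
  have zero_apply_eq {m : ℕ} (hmn : m ≤ n) : R 0 (e n) = R m (e n) := by
    induction m with
    | zero => rfl
    | succ m ih =>
      rw [ih (Nat.le_of_succ_le hmn), h.succ]
      simp [deflate, inner_eq_zero_symm.1 (h.inner_left_eq_zero_of_lt hmn)]
  rw [zero_apply_eq le_rfl, (h.isTopSingularPair n).apply_left]

lemma enorm_inner_zero_apply_left (h : IsDeflationSeq R e f) (n : ℕ) :
    ‖inner 𝕜 (f n) (R 0 (e n))‖ₑ = ‖R n‖ₑ := by
  rcases eq_or_ne (R n) 0 with hn | hn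
  · simp [h.zero_apply_left, hn, ← ofReal_norm]
  · simp [h.zero_apply_left, inner_smul_right, inner_self_eq_norm_sq_to_K, ← ofReal_norm,
      (h.isTopSingularPair n).norm_right hn]

lemma rank_zero_sub_le (h : IsDeflationSeq R e f) (n : ℕ) :
    LinearMap.rank ((R 0 - R n : E →L[𝕜] F) : E →ₗ[𝕜] F) ≤ n := by
  induction n with
  | zero => simp [LinearMap.rank]
  | succ n ih =>
    have R_succ : R 0 - R (n + 1) = (R 0 - R n) + rankOne 𝕜 (R n (e n)) (e n) := by
      rw [h.succ, deflate]
      abel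
    rw [R_succ, toLinearMap_add, Nat.cast_succ]
    exact (LinearMap.rank_add_le _ _).trans (add_le_add ih (rank_rankOne_le_one _ _))

lemma enorm_inner_zero_apply_le (h : IsDeflationSeq R e f) (hR : Tendsto R atTop (𝓝 0))
    (x : E) (y : F) :
    ‖inner 𝕜 y (R 0 x)‖ₑ ≤ ∑' n, ‖R n‖ₑ * (‖inner 𝕜 (e n) x‖ₑ * ‖inner 𝕜 (f n) y‖ₑ) := by
  have tendsto_partial_sums :
      Tendsto (fun n => ‖inner 𝕜 y ((R 0 - R n) x)‖ₑ) atTop (𝓝 ‖inner 𝕜 y (R 0 x)‖ₑ) := by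
    have : Continuous fun T : E →L[𝕜] F => ‖inner 𝕜 y ((R 0 - T) x)‖ₑ := by fun_prop
    simpa only [sub_zero, Function.comp_def] using (this.tendsto 0).comp hR
  refine le_of_tendsto' tendsto_partial_sums fun n => ?_
  calc ‖inner 𝕜 y ((R 0 - R n) x)‖ₑ
      ≤ ∑ j ∈ Finset.range n, ‖R j‖ₑ * (‖inner 𝕜 (e j) x‖ₑ * ‖inner 𝕜 (f j) y‖ₑ) := by
        rw [h.zero_sub_eq_sum, sum_apply, inner_sum]
        refine (enorm_sum_le _ _).trans_eq (Finset.sum_congr rfl fun j _ => ?_)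
        have enorm_norm : ‖(‖R j‖ : 𝕜)‖ₑ = ‖R j‖ₑ := by simp [← ofReal_norm]
        simp [inner_smul_right, enorm_mul, enorm_norm, ← ofReal_norm (inner 𝕜 y (f j)),
          norm_inner_symm y]
    _ ≤ _ := ENNReal.sum_le_tsum _

lemma tsum_enorm_inner_zero_apply_le (h : IsDeflationSeq R e f) {ι : Type*} {u : ι → E} {v : ι → F}
    (hu : IsPaddedOrthonormal 𝕜 u) (hv : IsPaddedOrthonormal 𝕜 v) :
    ∑' i, ‖inner 𝕜 (v i) (R 0 (u i))‖ₑ ≤ ∑' n, ‖R n‖ₑ := by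
  by_cases htop : ∑' n, ‖R n‖ₑ = ⊤
  · exact htop ▸ le_top
  have hR : Tendsto R atTop (𝓝 0) :=
    tendsto_zero_iff_enorm_tendsto_zero.2 (ENNReal.tendsto_atTop_zero_of_tsum_ne_top htop)
  calc ∑' i, ‖inner 𝕜 (v i) (R 0 (u i))‖ₑ
      ≤ ∑' i, ∑' n, ‖R n‖ₑ * (‖inner 𝕜 (e n) (u i)‖ₑ * ‖inner 𝕜 (f n) (v i)‖ₑ) :=
        ENNReal.tsum_le_tsum fun i => h.enorm_inner_zero_apply_le hR (u i) (v i)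
    _ = ∑' n, ‖R n‖ₑ * ∑' i, ‖inner 𝕜 (u i) (e n)‖ₑ * ‖inner 𝕜 (v i) (f n)‖ₑ := by
        rw [ENNReal.tsum_comm]
        simp only [ENNReal.tsum_mul_left, ← ofReal_norm, norm_inner_symm]
    _ ≤ ∑' n, ‖R n‖ₑ * 1 := by
        gcongr with n
        exact (hu.tsum_enorm_inner_mul_enorm_inner_le hv (e n) (f n)).trans
          (mul_le_one' (h.isPaddedOrthonormal_left.enorm_le_one n)
            (h.isPaddedOrthonormal_right.enorm_le_one n))
    _ = ∑' n, ‖R n‖ₑ := by simp only [mul_one]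

end IsDeflationSeq

end Deflation

section ApproxNum

variable {H : Type*} [NormedAddCommGroup H] [InnerProductSpace ℂ H] [CompleteSpace H]
  {A B F : H →L[ℂ] H} {m n : ℕ}

lemma approxNum_le (hF : LinearMap.rank (F : H →ₗ[ℂ] H) ≤ n) : approxNum A n ≤ ‖A - F‖ :=
  csInf_le ⟨0, by rintro _ ⟨F, -, rfl⟩; exact norm_nonneg _⟩ ⟨F, hF, rfl⟩

lemma le_approxNum {c : ℝ}
    (h : ∀ F : H →L[ℂ] H, LinearMap.rank (F : H →ₗ[ℂ] H) ≤ n → c ≤ ‖A - F‖) :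
    c ≤ approxNum A n :=
  le_csInf ⟨_, 0, by simp, rfl⟩ (by rintro _ ⟨F, hF, rfl⟩; exact h F hF)

lemma approxNum_nonneg : 0 ≤ approxNum A n := le_approxNum fun _ _ => norm_nonneg _

lemma antitone_approxNum (A : H →L[ℂ] H) : Antitone (approxNum A) := fun _ _ hmn =>
  le_approxNum fun _ hF => approxNum_le (hF.trans (Nat.cast_le.2 hmn))

lemma approxNum_add_le_approxNum_sub (hF : LinearMap.rank (F : H →ₗ[ℂ] H) ≤ m) :
    approxNum A (n + m) ≤ approxNum (A - F) n :=
  le_approxNum fun G hG => by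
    have rank_add_le : LinearMap.rank ((G + F : H →L[ℂ] H) : H →ₗ[ℂ] H) ≤ (n + m : ℕ) := by
      rw [toLinearMap_add, Nat.cast_add]
      exact (LinearMap.rank_add_le _ _).trans (add_le_add hG hF)
    simpa only [sub_sub, add_comm F G] using approxNum_le (A := A) rank_add_le

lemma le_approxNum_of_lt_rank {V : Submodule ℂ H} {c : ℝ} (hV : n < Module.rank ℂ V)
    (hc : ∀ x ∈ V, c * ‖x‖ ≤ ‖A x‖) : c ≤ approxNum A n := by
  refine le_approxNum fun F hF => ?_
  have not_injective : ¬ Function.Injective ((F : H →ₗ[ℂ] H) ∘ₗ V.subtype) := fun hinj =>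
    hV.not_ge <| calc Module.rank ℂ V
        = LinearMap.rank ((F : H →ₗ[ℂ] H) ∘ₗ V.subtype) := (rank_range_of_injective _ hinj).symm
      _ ≤ LinearMap.rank (F : H →ₗ[ℂ] H) := LinearMap.rank_comp_le_left _ _
      _ ≤ n := hF
  obtain ⟨⟨x, hxV⟩, hFx, x_ne_zero⟩ :=
    (Submodule.ne_bot_iff _).1 (mt LinearMap.ker_eq_bot.1 not_injective)
  have hFx : F x = 0 := hFx
  refine le_of_mul_le_mul_right ?_ (norm_pos_iff.2 (Subtype.coe_ne_coe.2 x_ne_zero))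
  calc c * ‖x‖ ≤ ‖(A - F) x‖ := by simpa only [sub_apply, hFx, sub_zero] using hc x hxV
    _ ≤ ‖A - F‖ * ‖x‖ := (A - F).le_opNorm x

lemma IsDeflationSeq.approxNum_zero {R : ℕ → H →L[ℂ] H} {e f : ℕ → H} (h : IsDeflationSeq R e f)
    (n : ℕ) : approxNum (R 0) n = ‖R n‖ := by
  refine le_antisymm (by simpa using approxNum_le (A := R 0) (h.rank_zero_sub_le n)) ?_
  rcases eq_or_ne (R n) 0 with hn | hn
  · rw [hn, norm_zero]
    exact approxNum_nonneg
  have norm_le (i : Fin (n + 1)) : ‖R n‖ ≤ ‖R i‖ := h.antitone_norm (Nat.le_of_lt_succ i.2)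
  have R_ne_zero (i : Fin (n + 1)) : R i ≠ 0 :=
    norm_pos_iff.1 ((norm_pos_iff.2 hn).trans_le (norm_le i))
  have he : Orthonormal ℂ fun i : Fin (n + 1) => e i :=
    h.isPaddedOrthonormal_left.orthonormal_comp Fin.val_injective fun i =>
      (h.isTopSingularPair i).left_ne_zero (R_ne_zero i)
  have hf : Orthonormal ℂ fun i : Fin (n + 1) => f i :=
    h.isPaddedOrthonormal_right.orthonormal_comp Fin.val_injective fun i =>
      (h.isTopSingularPair i).adjoint.left_ne_zero (by simpa using R_ne_zero i)
  have rank_span_eq :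
      Module.rank ℂ (Submodule.span ℂ (range fun i : Fin (n + 1) => e i)) = (n + 1 : ℕ) := by
    rw [rank_eq_card_basis (Module.Basis.span he.linearIndependent), Fintype.card_fin]
  refine le_approxNum_of_lt_rank (rank_span_eq ▸ Nat.cast_lt.2 n.lt_succ_self) fun x hx =>
    mul_norm_le_norm_apply_of_mem_span he hf (fun i => h.zero_apply_left i)
      (norm_nonneg _) (fun i => by simpa using norm_le i) hx

lemma IsDeflationSeq.ofReal_approxNum_zero {R : ℕ → H →L[ℂ] H} {e f : ℕ → H}
    (h : IsDeflationSeq R e f) (n : ℕ) : ENNReal.ofReal (approxNum (R 0) n) = ‖R n‖ₑ := by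
  rw [h.approxNum_zero, ofReal_norm]

lemma tsum_approxNum_add_le (hA : IsCompactOperator A) (hB : IsCompactOperator B) :
    ∑' n, ENNReal.ofReal (approxNum (A + B) n) ≤
      ∑' n, ENNReal.ofReal (approxNum A n) + ∑' n, ENNReal.ofReal (approxNum B n) := by
  obtain ⟨R, e, f, hR, hR0, -⟩ := exists_isDeflationSeq (A := A + B) (hA.add hB)
  obtain ⟨S, _, _, hS, rfl, -⟩ := exists_isDeflationSeq hA
  obtain ⟨T, _, _, hT, rfl, -⟩ := exists_isDeflationSeq hB
  have he := hR.isPaddedOrthonormal_left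
  have hf := hR.isPaddedOrthonormal_right
  calc ∑' n, ENNReal.ofReal (approxNum (S 0 + T 0) n)
      = ∑' n, ‖inner ℂ (f n) ((S 0 + T 0) (e n))‖ₑ := by
        simp only [← hR0, hR.ofReal_approxNum_zero, hR.enorm_inner_zero_apply_left]
    _ ≤ ∑' n, (‖inner ℂ (f n) (S 0 (e n))‖ₑ + ‖inner ℂ (f n) (T 0 (e n))‖ₑ) := by
        gcongr with n
        rw [add_apply, inner_add_right]
        exact enorm_add_le _ _
    _ ≤ ∑' n, ‖S n‖ₑ + ∑' n, ‖T n‖ₑ := by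
        rw [ENNReal.tsum_add]
        exact add_le_add (hS.tsum_enorm_inner_zero_apply_le he hf)
          (hT.tsum_enorm_inner_zero_apply_le he hf)
    _ = ∑' n, ENNReal.ofReal (approxNum (S 0) n) + ∑' n, ENNReal.ofReal (approxNum (T 0) n) := by
        simp only [hS.ofReal_approxNum_zero, hT.ofReal_approxNum_zero]

lemma exists_isCompactOperator_approxNum_eq (hA : IsCompactOperator A) (k : ℕ) :
    ∃ T : H →L[ℂ] H, IsCompactOperator T ∧ LinearMap.rank ((A - T : H →L[ℂ] H) : H →ₗ[ℂ] H) ≤ k ∧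
      ∀ n, approxNum T n = approxNum A (n + k) := by
  obtain ⟨R, e, f, hR, rfl, R_compact⟩ := exists_isDeflationSeq hA
  refine ⟨R k, R_compact k, hR.rank_zero_sub_le k, fun n => ?_⟩
  rw [hR.approxNum_zero, ← (hR.add_right k).approxNum_zero, zero_add]

lemma tsum_approxNum_add_nat_add_le (hA : IsCompactOperator A) (hB : IsCompactOperator B)
    (k l : ℕ) :
    ∑' n, ENNReal.ofReal (approxNum (A + B) (n + (k + l))) ≤
      ∑' n, ENNReal.ofReal (approxNum A (n + k)) + ∑' n, ENNReal.ofReal (approxNum B (n + l)) := by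
  obtain ⟨S, S_compact, rank_A_sub_S, hS⟩ := exists_isCompactOperator_approxNum_eq hA k
  obtain ⟨T, T_compact, rank_B_sub_T, hT⟩ := exists_isCompactOperator_approxNum_eq hB l
  have rank_le : LinearMap.rank ((A - S + (B - T) : H →L[ℂ] H) : H →ₗ[ℂ] H) ≤ (k + l : ℕ) := by
    rw [toLinearMap_add, Nat.cast_add]
    exact (LinearMap.rank_add_le _ _).trans (add_le_add rank_A_sub_S rank_B_sub_T)
  have sub_eq : A + B - (A - S + (B - T)) = S + T := by abel
  calc ∑' n, ENNReal.ofReal (approxNum (A + B) (n + (k + l)))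
      ≤ ∑' n, ENNReal.ofReal (approxNum (S + T) n) := by
        gcongr
        exact sub_eq ▸ approxNum_add_le_approxNum_sub rank_le
    _ ≤ _ := by simpa only [hS, hT] using tsum_approxNum_add_le S_compact T_compact

end ApproxNum

section TsumMin

variable {a b c : ℕ → ℝ≥0∞} {t : ℝ≥0∞}

lemma tsum_min_le_mul_add_tsum_nat_add (a : ℕ → ℝ≥0∞) (t : ℝ≥0∞) (k : ℕ) :
    ∑' n, min (a n) t ≤ k * t + ∑' n, a (n + k) :=
  calc ∑' n, min (a n) t
      = ∑ n ∈ Finset.range k, min (a n) t + ∑' n, min (a (n + k)) t :=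
        (ENNReal.summable.sum_add_tsum_nat_add' (f := fun n => min (a n) t)).symm
    _ ≤ ∑ _n ∈ Finset.range k, t + ∑' n, a (n + k) := by
        gcongr
        exacts [min_le_right _ _, min_le_left _ _]
    _ = k * t + ∑' n, a (n + k) := by simp

lemma exists_mul_add_tsum_nat_add_le_tsum_min (ha : Antitone a) (ht : t ≠ 0) :
    ∃ k : ℕ, k * t + ∑' n, a (n + k) ≤ ∑' n, min (a n) t := by
  classical
  by_cases h : ∃ k, a k ≤ t
  · refine ⟨Nat.find h, Eq.le ?_⟩
    rw [← ENNReal.summable.sum_add_tsum_nat_add' (f := fun n => min (a n) t) (k := Nat.find h)]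
    congr 1
    · have min_eq (n) (hn : n ∈ Finset.range (Nat.find h)) : min (a n) t = t :=
        min_eq_right (not_le.1 (Nat.find_min h (Finset.mem_range.1 hn))).le
      simp [Finset.sum_congr rfl min_eq]
    · exact tsum_congr fun n =>
        (min_eq_left ((ha (Nat.le_add_left _ _)).trans (Nat.find_spec h))).symm
  · have tsum_eq_top : ∑' n, min (a n) t = ⊤ := by
      push Not at h
      simpa only [min_eq_right (h _).le] using ENNReal.tsum_const_eq_top_of_ne_zero ht
    exact ⟨0, tsum_eq_top ▸ le_top⟩

lemma tsum_min_le_add_of_tsum_nat_add_le (ha : Antitone a) (hb : Antitone b)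
    (h : ∀ k l, ∑' n, c (n + (k + l)) ≤ ∑' n, a (n + k) + ∑' n, b (n + l)) (ht : t ≠ 0) :
    ∑' n, min (c n) t ≤ ∑' n, min (a n) t + ∑' n, min (b n) t := by
  obtain ⟨k, hk⟩ := exists_mul_add_tsum_nat_add_le_tsum_min ha ht
  obtain ⟨l, hl⟩ := exists_mul_add_tsum_nat_add_le_tsum_min hb ht
  calc ∑' n, min (c n) t
      ≤ (k + l : ℕ) * t + ∑' n, c (n + (k + l)) := tsum_min_le_mul_add_tsum_nat_add c t (k + l)
    _ ≤ (k + l : ℕ) * t + (∑' n, a (n + k) + ∑' n, b (n + l)) := by gcongr; exact h k l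
    _ = (k * t + ∑' n, a (n + k)) + (l * t + ∑' n, b (n + l)) := by push_cast; ring
    _ ≤ ∑' n, min (a n) t + ∑' n, min (b n) t := add_le_add hk hl

end TsumMin

section LIntegralMin

variable {p x : ℝ}

lemma setLIntegral_Ioc_ofReal_rpow (hx : 0 ≤ x) {q : ℝ} (hq : -1 < q) :
    ∫⁻ t in Ioc 0 x, ENNReal.ofReal (t ^ q) = ENNReal.ofReal (x ^ (q + 1) / (q + 1)) := by
  have integrable : IntegrableOn (fun t : ℝ => t ^ q) (Ioc 0 x) :=
    (intervalIntegrable_iff_integrableOn_Ioc_of_le hx).1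
      (intervalIntegral.intervalIntegrable_rpow' hq)
  have nonneg : 0 ≤ᵐ[volume.restrict (Ioc 0 x)] fun t : ℝ => t ^ q :=
    (ae_restrict_mem measurableSet_Ioc).mono fun t ht => Real.rpow_nonneg ht.1.le q
  rw [← ofReal_integral_eq_lintegral_ofReal integrable nonneg,
    ← intervalIntegral.integral_of_le hx, integral_rpow (Or.inl hq),
    Real.zero_rpow (by linarith), sub_zero]

lemma setLIntegral_Ioi_ofReal_rpow (hx : 0 < x) {q : ℝ} (hq : q < -1) :
    ∫⁻ t in Ioi x, ENNReal.ofReal (t ^ q) = ENNReal.ofReal (-x ^ (q + 1) / (q + 1)) := by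
  have nonneg : 0 ≤ᵐ[volume.restrict (Ioi x)] fun t : ℝ => t ^ q :=
    (ae_restrict_mem measurableSet_Ioi).mono fun t ht => Real.rpow_nonneg (hx.trans ht).le q
  rw [← ofReal_integral_eq_lintegral_ofReal (integrableOn_Ioi_rpow_of_lt hq hx) nonneg,
    integral_Ioi_rpow_of_lt hq hx]

lemma ofReal_rpow_eq_mul_lintegral_min (hp0 : 0 < p) (hp1 : p < 1) (x : ℝ) :
    ENNReal.ofReal x ^ p = ENNReal.ofReal (p * (1 - p)) *
      ∫⁻ t in Ioi 0, min (ENNReal.ofReal x) (ENNReal.ofReal t) * ENNReal.ofReal (t ^ (p - 2)) := by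
  rcases le_or_gt x 0 with hx | hx
  · simp [ENNReal.ofReal_of_nonpos hx, hp0]
  have lintegral_Ioc : ∫⁻ t in Ioc 0 x, min (ENNReal.ofReal x) (ENNReal.ofReal t) *
      ENNReal.ofReal (t ^ (p - 2)) = ENNReal.ofReal (x ^ p / p) := by
    rw [setLIntegral_congr_fun (g := fun t => ENNReal.ofReal (t ^ (p - 1))) measurableSet_Ioc
      fun t ht => ?_, setLIntegral_Ioc_ofReal_rpow hx.le (by linarith), sub_add_cancel]
    have mul_rpow : t * t ^ (p - 2) = t ^ (p - 1) := by
      rw [← Real.rpow_one_add' ht.1.le (by linarith)]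
      ring_nf
    simp only [min_eq_right (ENNReal.ofReal_le_ofReal ht.2), ← ENNReal.ofReal_mul ht.1.le, mul_rpow]
  have lintegral_Ioi : ∫⁻ t in Ioi x, min (ENNReal.ofReal x) (ENNReal.ofReal t) *
      ENNReal.ofReal (t ^ (p - 2)) = ENNReal.ofReal (x ^ p / (1 - p)) := by
    rw [setLIntegral_congr_fun (g := fun t => ENNReal.ofReal x * ENNReal.ofReal (t ^ (p - 2)))
      measurableSet_Ioi fun t ht => by rw [min_eq_left (ENNReal.ofReal_le_ofReal ht.out.le)],
      lintegral_const_mul _ (by fun_prop), setLIntegral_Ioi_ofReal_rpow hx (by linarith),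
      ← ENNReal.ofReal_mul hx.le]
    have rpow_eq : x ^ p = x * x ^ (p - 2 + 1) := by
      rw [← Real.rpow_one_add' hx.le (by linarith)]
      ring_nf
    rw [rpow_eq, show p - 2 + 1 = -(1 - p) by ring, neg_div_neg_eq, mul_div_assoc]
  have one_sub_pos : 0 < 1 - p := sub_pos.2 hp1
  have sum_eq : x ^ p = p * (1 - p) * (x ^ p / p + x ^ p / (1 - p)) := by
    field_simp
    ring
  rw [← Ioc_union_Ioi_eq_Ioi hx.le, lintegral_union measurableSet_Ioi Ioc_disjoint_Ioi_same,
    lintegral_Ioc, lintegral_Ioi, ← ENNReal.ofReal_add (by positivity) (by positivity),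
    ← ENNReal.ofReal_mul (by positivity), ← sum_eq, ENNReal.ofReal_rpow_of_pos hx]

lemma tsum_ofReal_rpow_eq_mul_lintegral_tsum_min (hp0 : 0 < p) (hp1 : p < 1) (a : ℕ → ℝ) :
    ∑' n, ENNReal.ofReal (a n) ^ p = ENNReal.ofReal (p * (1 - p)) *
      ∫⁻ t in Ioi 0, (∑' n, min (ENNReal.ofReal (a n)) (ENNReal.ofReal t)) *
        ENNReal.ofReal (t ^ (p - 2)) := by
  simp only [ofReal_rpow_eq_mul_lintegral_min hp0 hp1, ENNReal.tsum_mul_left]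
  rw [← lintegral_tsum fun n => by fun_prop]
  simp only [ENNReal.tsum_mul_right]

lemma tsum_ofReal_rpow_le_add_of_tsum_min_le {a b c : ℕ → ℝ} (hp0 : 0 < p) (hp1 : p < 1)
    (h : ∀ t > 0, ∑' n, min (ENNReal.ofReal (c n)) (ENNReal.ofReal t) ≤
      ∑' n, min (ENNReal.ofReal (a n)) (ENNReal.ofReal t) +
        ∑' n, min (ENNReal.ofReal (b n)) (ENNReal.ofReal t)) :
    ∑' n, ENNReal.ofReal (c n) ^ p ≤
      ∑' n, ENNReal.ofReal (a n) ^ p + ∑' n, ENNReal.ofReal (b n) ^ p := by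
  simp only [tsum_ofReal_rpow_eq_mul_lintegral_tsum_min hp0 hp1]
  rw [← mul_add, ← lintegral_add_left]
  · refine mul_le_mul' le_rfl (setLIntegral_mono' measurableSet_Ioi fun t ht => ?_)
    exact (mul_le_mul' (h t ht) le_rfl).trans_eq (add_mul _ _ _)
  · exact (Measurable.tsum fun n => by fun_prop).mul (by fun_prop)

end LIntegralMin

/-- Modified triangle inequality in the Schatten class `𝐒_p`, `0 < p ≤ 1`:
`‖A + B‖_p^p ≤ ‖A‖_p^p + ‖B‖_p^p`, with `‖A‖_p^p = ∑_n s_n(A)^p`. -/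
theorem stmt8 {H : Type*} [NormedAddCommGroup H] [InnerProductSpace ℂ H] [CompleteSpace H]
    (A B : H →L[ℂ] H) (hA : IsCompactOperator (A : H → H)) (hB : IsCompactOperator (B : H → H))
    (p : ℝ) (hp0 : 0 < p) (hp1 : p ≤ 1) :
    ∑' n : ℕ, ENNReal.ofReal (approxNum (A + B) n) ^ p ≤
      (∑' n : ℕ, ENNReal.ofReal (approxNum A n) ^ p) +
        ∑' n : ℕ, ENNReal.ofReal (approxNum B n) ^ p := by
  rcases hp1.eq_or_lt with rfl | hp1
  · simpa using tsum_approxNum_add_le hA hB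
  have antitone (T : H →L[ℂ] H) : Antitone fun n => ENNReal.ofReal (approxNum T n) :=
    fun _ _ hmn => ENNReal.ofReal_le_ofReal (antitone_approxNum T hmn)
  refine tsum_ofReal_rpow_le_add_of_tsum_min_le hp0 hp1 fun t ht => ?_
  exact tsum_min_le_add_of_tsum_nat_add_le (antitone A) (antitone B)
    (tsum_approxNum_add_nat_add_le hA hB) (by simpa using ht)
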